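/- arXiv:2311.06779 — 6 statements merged into one kernel-verified Lean document; each statement's English description precedes it below -/
import Mathlib

section
/- For every even integer k ≥ 6, there do not exist integers P and Q such that s_k · P + s_{k/2,k/2} · Q = 1 and a_k · P + a_{k/2,k/2} · Q = 0. (This is the arithmetic content of the key lemma in the case k even: for an oriented closed 4k-manifold whose only possibly non-zero Pontrjagin numbers are P = p_k[M] and Q = p_{k/2}²[M], the signature s_k·P + s_{k/2,k/2}·Q cannot equal 1 while the Â-genus a_k·P + a_{k/2,k/2}·Q vanishes.) -/
/-!
Write `k = 2m`. Eliminating `P` from the two equations gives (`square_equation`)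
`Q * (2 ^ (2m - 1) * (2 ^ (2m) - 1) * B_{2m})² = ((2m)!)²`.
If a prime `p > 2m + 1` divides `2 ^ (2m) - 1`, this is impossible for an integer `Q`: the
denominator of `B_{2m}` is prime to `p` (`padicNorm_bernoulli'_le_one`), so `p` divides the left
side but not `(2m)!`.

Such a prime exists for all `m ≥ 4` with `m ≠ 6` (`exists_large_prime`). By Bang's theorem
(`exists_prime_orderOf_two`), every `d ≥ 2` other than `6` is the order of `2` modulo some prime
`p ≡ 1 (mod d)`. Choosing `d ∣ 2m` according to `m` modulo `8`, the candidates `p ≤ 2m + 1` are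
excluded because `2` is a square modulo `p` if and only if `p ≡ ±1 (mod 8)`.

The cases `m = 3` and `m = 6` are settled by the prime `691`, which divides the numerator of `B_12`.
-/

/-- The coefficient of `p_k` in the k-th Hirzebruch L-polynomial:
`s_k = 2^{2k}(2^{2k-1}-1)|B_{2k}|/(2k)!`. -/
noncomputable def sCoef (k : ℕ) : ℚ :=
  2 ^ (2 * k) * (2 ^ (2 * k - 1) - 1) * |bernoulli (2 * k)| / ((2 * k).factorial : ℚ)

/-- The coefficient of `p_k` in the k-th Hirzebruch Â-polynomial:
`a_k = -|B_{2k}|/(2·(2k)!)`. -/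
noncomputable def aCoef (k : ℕ) : ℚ :=
  -|bernoulli (2 * k)| / (2 * ((2 * k).factorial : ℚ))

/-- For even `k`, the coefficient of `p_{k/2}²` in the k-th Hirzebruch L-polynomial:
`s_{k/2,k/2} = (s_{k/2}² − s_k)/2`. -/
noncomputable def sHalfCoef (k : ℕ) : ℚ := (sCoef (k / 2) ^ 2 - sCoef k) / 2

/-- For even `k`, the coefficient of `p_{k/2}²` in the k-th Hirzebruch Â-polynomial:
`a_{k/2,k/2} = (a_{k/2}² − a_k)/2`. -/
noncomputable def aHalfCoef (k : ℕ) : ℚ := (aCoef (k / 2) ^ 2 - aCoef k) / 2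

/-! ### Primes modulo which `2` has prescribed order -/

open Polynomial in
/-- If the prime `p` divides `Φ_n(2)`, where `n = p ^ a * m` and `p ∤ m`, then `2` has order `m`
modulo `p`, since `Φ_n` is a power of `Φ_m` modulo `p`. -/
lemma orderOf_two_of_dvd_cyclotomic {p a m : ℕ} (hp : p.Prime) (hm : ¬ p ∣ m)
    (h : (p : ℤ) ∣ (cyclotomic (p ^ a * m) ℤ).eval 2) : orderOf (2 : ZMod p) = m := by
  have : Fact p.Prime := ⟨hp⟩
  have : NeZero (m : ZMod p) := NeZero.of_not_dvd (ZMod p) hm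
  have hroot : (cyclotomic (p ^ a * m) (ZMod p)).IsRoot 2 := by
    have h2 := (ZMod.intCast_zmod_eq_zero_iff_dvd _ p).mpr h
    have h3 := cyclotomic.eval_apply (2 : ℤ) (p ^ a * m) (Int.castRingHom (ZMod p))
    simp only [eq_intCast, h2] at h3
    simpa [IsRoot.def] using h3
  exact (isRoot_cyclotomic_prime_pow_mul_iff_of_charP.mp hroot).eq_orderOf.symm

lemma orderOf_two_dvd {p : ℕ} (hp : p.Prime) (h2 : p ≠ 2) : orderOf (2 : ZMod p) ∣ p - 1 := by
  have : Fact p.Prime := ⟨hp⟩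
  refine ZMod.orderOf_dvd_card_sub_one fun h => h2 ?_
  have : ((2 : ℕ) : ZMod p) = 0 := by exact_mod_cast h
  exact (Nat.prime_dvd_prime_iff_eq hp Nat.prime_two).mp ((ZMod.natCast_eq_zero_iff _ _).mp this)

open Polynomial in
lemma cyclotomic_eval_two_dvd (n : ℕ) : (cyclotomic n ℤ).eval 2 ∣ 2 ^ n - 1 := by
  have := eval_dvd (x := (2 : ℤ)) (cyclotomic.dvd_X_pow_sub_one n ℤ)
  simpa using this

open Polynomial in
/-- With `y = 2 ^ n ≡ 1 (mod p)`, the value `Φ_{pn}(2)` divides `1 + y + ⋯ + y ^ (p - 1)`, which is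
divisible by `p` exactly once. -/
lemma sq_not_dvd_cyclotomic {p n : ℕ} (hp : p.Prime) (hp2 : p ≠ 2) (hn : 0 < n)
    (h : (p : ℤ) ∣ 2 ^ n - 1) : ¬ (p : ℤ) ^ 2 ∣ (cyclotomic (p * n) ℤ).eval 2 := by
  intro hsq
  have hmem : n ∈ (p * n).properDivisors := by
    rw [Nat.mem_properDivisors]
    exact ⟨dvd_mul_left _ _, by nlinarith [hp.two_le]⟩
  have h1 := eval_dvd (x := (2 : ℤ)) (X_pow_sub_one_mul_cyclotomic_dvd_X_pow_sub_one_of_dvd ℤ hmem)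
  simp only [eval_mul, eval_sub, eval_pow, eval_X, eval_one] at h1
  have hne : (2 : ℤ) ^ n - 1 ≠ 0 := by
    have : (2 : ℤ) ^ 1 ≤ 2 ^ n := pow_le_pow_right₀ (by norm_num) hn
    omega
  have hgeom : (2 : ℤ) ^ (p * n) - 1 =
      (2 ^ n - 1) * ∑ i ∈ Finset.range p, ((2 : ℤ) ^ n) ^ i * 1 ^ (p - 1 - i) := by
    have := geom_sum₂_mul ((2 : ℤ) ^ n) 1 p
    rw [mul_comm (2 ^ n - 1 : ℤ), this, mul_comm p n, pow_mul, one_pow]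
  rw [hgeom] at h1
  have h2 := hsq.trans ((mul_dvd_mul_iff_left hne).mp h1)
  have hpZ : Prime (p : ℤ) := Nat.prime_iff_prime_int.mp hp
  have h3 := emultiplicity_geom_sum₂_eq_one (x := (2 : ℤ) ^ n) (y := 1) hpZ
    (hp.odd_of_ne_two hp2) h (by
      intro hx
      exact hpZ.not_dvd_one ((dvd_sub_right hx).mp h))
  have h4 := le_emultiplicity_of_pow_dvd h2
  rw [h3] at h4
  norm_num at h4

lemma three_mul_lt {p : ℕ} (hp : 5 ≤ p) : 3 * p + 1 < 2 ^ p := by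
  induction p, hp using Nat.le_induction with
  | base => norm_num
  | succ k hk ih => rw [pow_succ]; omega

open Polynomial in
/-- Size estimate: `Φ_{pn}(2)` exceeds `p`. It equals `Φ_n(2 ^ p)` if `p ∣ n`, and
`Φ_n(2 ^ p) / Φ_n(2)` otherwise; the bounds `(x - 1) ^ φ(n) ≤ Φ_n(x) ≤ (x + 1) ^ φ(n)` then
reduce the claim to `p < 2 ^ p - 1`, respectively `3 p < 2 ^ p - 1`. The latter fails for
`p = 3`, where `n ∣ 2` leaves only `Φ_3(2) = 7` and the true exception `Φ_6(2) = 3`. -/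
lemma cyclotomic_eval_two_ne {p n : ℕ} (hp : p.Prime) (hp2 : p ≠ 2) (hn : 0 < n)
    (h6 : p * n ≠ 6) (hn3 : p = 3 → ¬ p ∣ n → n ∣ 2) : (cyclotomic (p * n) ℤ).eval 2 ≠ p := by
  intro h
  have hp3 : 3 ≤ p := by have := hp.two_le; omega
  have hR : (cyclotomic (p * n) ℝ).eval 2 = p := by
    have := cyclotomic.eval_apply (2 : ℤ) (p * n) (Int.castRingHom ℝ)
    rw [h] at this
    simpa using this
  have hφ : n.totient ≠ 0 := (Nat.totient_pos.mpr hn).ne'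
  have h2p : (1 : ℝ) < 2 ^ p := one_lt_pow₀ (by norm_num) hp.ne_zero
  have hlow := sub_one_pow_totient_le_cyclotomic_eval h2p n
  by_cases hd : p ∣ n
  · have hexp := congrArg (eval (2 : ℝ)) (cyclotomic_expand_eq_cyclotomic hp hd ℝ)
    rw [expand_eval, mul_comm n p, hR] at hexp
    rw [hexp] at hlow
    have h1 : (p : ℝ) + 1 < 2 ^ p := by
      have : p + 1 < 2 ^ p := by
        rcases hp3.eq_or_lt with h3 | h3
        · subst h3; norm_num
        · have := three_mul_lt (p := p) (by
            have : 4 ≠ p := by rintro rfl; norm_num at hp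
            omega)
          omega
      exact_mod_cast this
    have h4 : (2 : ℝ) ^ p - 1 ≤ (2 ^ p - 1) ^ n.totient :=
      le_self_pow₀ (by have : (1 : ℝ) ≤ p := by exact_mod_cast hp.one_lt.le
                       linarith) hφ
    linarith
  · have hexp := congrArg (eval (2 : ℝ)) (cyclotomic_expand_eq_cyclotomic_mul hp hd ℝ)
    rw [expand_eval, eval_mul, mul_comm n p, hR] at hexp
    rcases hp3.eq_or_lt with h3 | h3
    · have := hn3 h3.symm hd
      rcases (Nat.dvd_prime Nat.prime_two).mp this with rfl | rfl
      · subst h3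
        norm_num at hR
      · omega
    have hp5 : 5 ≤ p := by
      have : 4 ≠ p := by rintro rfl; norm_num at hp
      omega
    have hup := cyclotomic_eval_le_add_one_pow_totient (q := (2 : ℝ)) (by norm_num) n
    have h1 : 3 * (p : ℝ) + 1 < 2 ^ p := by exact_mod_cast three_mul_lt hp5
    have hp1 : (1 : ℝ) ≤ p := by exact_mod_cast hp.one_lt.le
    have h4 : (3 * (p : ℝ)) ^ n.totient < (2 ^ p - 1) ^ n.totient :=
      pow_lt_pow_left₀ (by linarith) (by linarith) hφ
    have h5 : (p : ℝ) ≤ p ^ n.totient := le_self_pow₀ hp1 hφ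
    have h6 : (p : ℝ) * (2 + 1) ^ n.totient ≤ (3 * (p : ℝ)) ^ n.totient := by
      rw [mul_pow, mul_comm]
      norm_num
      gcongr
    have h7 : (p : ℝ) * eval 2 (cyclotomic n ℝ) ≤ p * (2 + 1) ^ n.totient := by gcongr
    linarith

open Polynomial in
/-- Bang's theorem, the case of base `2` of Zsigmondy's theorem: if `n ≥ 2` and `n ≠ 6`, then `2`
has order exactly `n` modulo some prime. Otherwise every prime factor `p` of `Φ_n(2)` divides `n`;
writing `n = p ^ (a + 1) * m` with `p ∤ m`, one has `m ∣ p - 1`, so `p` is the largest prime factor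
of `n`. Hence `Φ_n(2)` is a power of `p`, therefore equal to `p`, which is too small. -/
theorem exists_prime_orderOf_two {n : ℕ} (hn : 2 ≤ n) (hn6 : n ≠ 6) :
    ∃ p : ℕ, p.Prime ∧ orderOf (2 : ZMod p) = n := by
  by_contra! hcon
  set N : ℤ := (cyclotomic n ℤ).eval 2 with hN
  have hpos : 0 < n := by omega
  have hN1 : 1 < N.natAbs := by
    have := sub_one_lt_natAbs_cyclotomic_eval (n := n) (q := 2) (by omega) (by norm_num)
    exact this
  have hNpos : 0 < N := cyclotomic_pos' n (by norm_num)
  have hodd : ∀ p : ℕ, (p : ℤ) ∣ N → p ≠ 2 := by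
    rintro p hp rfl
    have h1 := hp.trans (cyclotomic_eval_two_dvd n)
    have h2 : ((2 : ℕ) : ℤ) ∣ 2 ^ n := dvd_pow_self _ (by omega)
    have h3 := (dvd_sub_right h2).mp h1
    norm_num at h3
  have key : ∀ p : ℕ, p.Prime → (p : ℤ) ∣ N →
      ∃ a m, n = p ^ (a + 1) * m ∧ ¬ p ∣ m ∧ orderOf (2 : ZMod p) = m ∧ m ∣ p - 1 := by
    intro p hp hpN
    obtain ⟨a, m, hm, rfl⟩ := Nat.exists_eq_pow_mul_and_not_dvd hpos.ne' p hp.ne_one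
    have ho := orderOf_two_of_dvd_cyclotomic hp hm hpN
    cases a with
    | zero => exact absurd (by simpa using ho) (hcon p hp)
    | succ a => exact ⟨a, m, rfl, hm, ho, ho ▸ orderOf_two_dvd hp (hodd p hpN)⟩
  have hlarge : ∀ p q : ℕ, p.Prime → (p : ℤ) ∣ N → q.Prime → q ∣ n → q ≤ p := by
    intro p q hp hpN hq hqn
    obtain ⟨a, m, rfl, hm, -, hdvd⟩ := key p hp hpN
    rcases hq.dvd_mul.mp hqn with h | h
    · exact (Nat.le_of_dvd hp.pos (hq.dvd_of_dvd_pow h))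
    · have := Nat.le_of_dvd (by have := hp.two_le; omega) (h.trans hdvd)
      omega
  have hdvdn : ∀ p : ℕ, p.Prime → (p : ℤ) ∣ N → p ∣ n := by
    intro p hp hpN
    obtain ⟨a, m, rfl, -⟩ := key p hp hpN
    exact (dvd_pow_self p (Nat.succ_ne_zero a)).mul_right m
  obtain ⟨p, hp, hpN'⟩ := Nat.exists_prime_and_dvd hN1.ne'
  have hpN : (p : ℤ) ∣ N := Int.natCast_dvd.mpr hpN'
  have hpow := Nat.eq_prime_pow_of_unique_prime_dvd (n := N.natAbs) (p := p) (by omega) (by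
    intro q hq hqN'
    have hqN : (q : ℤ) ∣ N := Int.natCast_dvd.mpr hqN'
    exact le_antisymm (hlarge p q hp hpN hq (hdvdn q hq hqN))
      (hlarge q p hq hqN hp (hdvdn p hp hpN)))
  obtain ⟨a, m, hnm, hm, hord, hdvd⟩ := key p hp hpN
  have hp2 := hodd p hpN
  have hn' : n = p * (p ^ a * m) := by rw [hnm, pow_succ']; ring
  have hpos' : 0 < p ^ a * m := Nat.pos_of_ne_zero fun h => by simp [h] at hn'; omega
  have hdiv2 : (p : ℤ) ∣ 2 ^ (p ^ a * m) - 1 := by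
    rw [← ZMod.intCast_zmod_eq_zero_iff_dvd]
    push_cast
    rw [mul_comm, pow_mul, ← hord, pow_orderOf_eq_one, one_pow, sub_self]
  have hsq := sq_not_dvd_cyclotomic hp hp2 hpos' hdiv2
  rw [← hn', ← hN] at hsq
  have hNp : N = p := by
    generalize N.natAbs.primeFactorsList.length = e at hpow
    have hNe : N = (p : ℤ) ^ e := by
      rw [← Int.natAbs_of_nonneg hNpos.le, hpow]; push_cast; rfl
    rcases e with _ | _ | e
    · simp at hpow; omega
    · simpa using hNe
    · exact absurd (hNe ▸ pow_dvd_pow _ (by omega)) hsq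
  refine cyclotomic_eval_two_ne hp hp2 hpos' (hn' ▸ hn6) ?_ (by rw [← hn', ← hN, hNp])
  rintro rfl h
  rcases a with _ | a
  · simpa using hdvd
  · exact absurd ((dvd_pow_self 3 (Nat.succ_ne_zero a)).mul_right m) h

/-! ### Large prime factors of `2 ^ (2m) - 1` -/

/-- The prime from `exists_prime_orderOf_two`, written as `p = n c + 1`. -/
lemma exists_prime_orderOf_two_eq_mul_add_one {n : ℕ} (hn : 2 ≤ n) (hn6 : n ≠ 6) :
    ∃ p c : ℕ, p.Prime ∧ p ≠ 2 ∧ orderOf (2 : ZMod p) = n ∧ p = n * c + 1 ∧ 0 < c := by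
  obtain ⟨p, hp, ho⟩ := exists_prime_orderOf_two hn hn6
  have h2 : p ≠ 2 := by
    rintro rfl
    have : orderOf (2 : ZMod 2) = 0 :=
      orderOf_eq_zero_iff'.mpr fun k hk => by
        rw [show (2 : ZMod 2) = 0 from rfl, zero_pow hk.ne']; decide
    omega
  obtain ⟨c, hc⟩ := ho ▸ orderOf_two_dvd hp h2
  have := hp.two_le
  refine ⟨p, c, hp, h2, ho, by omega, Nat.pos_of_ne_zero ?_⟩
  rintro rfl
  omega

/-- Euler's criterion combined with the second supplementary law of quadratic reciprocity. -/
lemma orderOf_two_dvd_half_iff {p : ℕ} (hp : p.Prime) (h2 : p ≠ 2) :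
    orderOf (2 : ZMod p) ∣ p / 2 ↔ p % 8 = 1 ∨ p % 8 = 7 := by
  have : Fact p.Prime := ⟨hp⟩
  have h0 : (2 : ZMod p) ≠ 0 := by
    intro h
    have : ((2 : ℕ) : ZMod p) = 0 := by exact_mod_cast h
    exact h2 ((Nat.prime_dvd_prime_iff_eq hp Nat.prime_two).mp
      ((ZMod.natCast_eq_zero_iff _ _).mp this))
  rw [← ZMod.exists_sq_eq_two_iff h2, ZMod.euler_criterion p h0, orderOf_dvd_iff_pow_eq_one]

/-- The number `2 ^ (2m) - 1` has a prime factor exceeding `2m + 1`. The prime is one modulo which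
`2` has order `d` for a suitable `d ∣ 2m`. It has the form `d c + 1`, and the small values of `c`
are ruled out by parity and by the quadratic character of `2`, according to `m` modulo `8`. -/
lemma exists_large_prime {m : ℕ} (hm : 4 ≤ m) (hm6 : m ≠ 6) :
    ∃ p : ℕ, p.Prime ∧ 2 * m + 1 < p ∧ p ∣ 2 ^ (2 * m) - 1 := by
  suffices h : ∃ p d : ℕ, p.Prime ∧ 2 * m + 1 < p ∧ orderOf (2 : ZMod p) = d ∧ d ∣ 2 * m by
    obtain ⟨p, d, hp, hlt, rfl, hd⟩ := h
    refine ⟨p, hp, hlt, ?_⟩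
    rw [← ZMod.natCast_eq_zero_iff, Nat.cast_sub Nat.one_le_two_pow]
    push_cast
    rw [orderOf_dvd_iff_pow_eq_one.mp hd, sub_self]
  have hmod : (m % 4 = 0 ∨ m % 4 = 3) ∨ m % 4 = 1 ∨ m % 8 = 2 ∨ m % 8 = 6 := by omega
  rcases hmod with h | h | h | h
  -- `d = 2m`: if `p = 2m + 1` then `p ≡ ±1 (mod 8)`, so `2` is a square and its order divides `m`.
  · obtain ⟨p, c, hp, h2, ho, hpc, hc⟩ :=
      exists_prime_orderOf_two_eq_mul_add_one (n := 2 * m) (by omega) (by omega)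
    refine ⟨p, _, hp, ?_, ho, dvd_rfl⟩
    have hiff := orderOf_two_dvd_half_iff hp h2
    rw [ho] at hiff
    have hc1 : c ≠ 1 := by
      rintro rfl
      have := Nat.le_of_dvd (by omega) (hiff.mpr (by omega))
      omega
    have : 2 * m * 2 ≤ 2 * m * c := Nat.mul_le_mul_left _ (by omega)
    omega
  -- `d = m` is odd, so `c` is even; `p = 2m + 1 ≡ 3 (mod 8)` would make `2 = 2 ^ (m + 1)` a square.
  · obtain ⟨p, c, hp, h2, ho, hpc, hc⟩ :=
      exists_prime_orderOf_two_eq_mul_add_one (n := m) (by omega) (by omega)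
    refine ⟨p, _, hp, ?_, ho, dvd_mul_left _ _⟩
    have hiff := orderOf_two_dvd_half_iff hp h2
    have hpodd := hp.eq_two_or_odd
    rw [ho] at hiff
    have hc1 : c ≠ 1 := by
      rintro rfl
      omega
    have hc2 : c ≠ 2 := by
      rintro rfl
      have := hiff.mp (by rw [show p / 2 = m by omega])
      omega
    have : m * 3 ≤ m * c := Nat.mul_le_mul_left _ (by omega)
    omega
  -- `d = r = m / 2 ≡ 1 (mod 4)`, so `c` is even; `p = 2r + 1 ≡ 3` and `p = 4r + 1 ≡ 5 (mod 8)`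
  -- are excluded because an element of odd order is a square.
  · obtain ⟨r, rfl⟩ : ∃ r, m = 2 * r := ⟨m / 2, by omega⟩
    obtain ⟨p, c, hp, h2, ho, hpc, hc⟩ :=
      exists_prime_orderOf_two_eq_mul_add_one (n := r) (by omega) (by omega)
    refine ⟨p, _, hp, ?_, ho, ⟨4, by ring⟩⟩
    have hiff := orderOf_two_dvd_half_iff hp h2
    have hpodd := hp.eq_two_or_odd
    rw [ho] at hiff
    have hc1 : c ≠ 1 := by
      rintro rfl
      omega
    have hc2 : c ≠ 2 := by
      rintro rfl
      have := hiff.mp (by rw [show p / 2 = r by omega])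
      omega
    have hc3 : c ≠ 3 := by
      rintro rfl
      omega
    have hc4 : c ≠ 4 := by
      rintro rfl
      have := hiff.mp ⟨2, by omega⟩
      omega
    have : r * 5 ≤ r * c := Nat.mul_le_mul_left _ (by omega)
    omega
  -- `d = m = 2r` with `r ≡ 3 (mod 4)`: for `p = 2r + 1 ≡ 7 (mod 8)` the order of `2` would divide
  -- `r`, and for `p = 4r + 1 ≡ 5 (mod 8)` it cannot divide `(p - 1) / 2 = 2r`.
  · obtain ⟨p, c, hp, h2, ho, hpc, hc⟩ :=
      exists_prime_orderOf_two_eq_mul_add_one (n := m) (by omega) (by omega)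
    refine ⟨p, _, hp, ?_, ho, dvd_mul_left _ _⟩
    have hiff := orderOf_two_dvd_half_iff hp h2
    rw [ho] at hiff
    have hc1 : c ≠ 1 := by
      rintro rfl
      have := Nat.le_of_dvd (by omega) (hiff.mpr (by omega))
      omega
    have hc2 : c ≠ 2 := by
      rintro rfl
      have := hiff.mp (by rw [show p / 2 = m by omega])
      omega
    have : m * 3 ≤ m * c := Nat.mul_le_mul_left _ (by omega)
    omega

/-! ### Bernoulli numbers -/

/-- The recursion for `B_n` only divides by integers at most `n + 1`, so a prime `p > n + 1` does
not divide the denominator of `B_n`. -/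
lemma padicNorm_bernoulli'_le_one {p : ℕ} [Fact p.Prime] (n : ℕ) (hn : n + 1 < p) :
    padicNorm p (bernoulli' n) ≤ 1 := by
  induction n using Nat.strong_induction_on with
  | _ n ih =>
    rw [bernoulli'_def]
    refine padicNorm.sub.trans
      (max_le padicNorm.one.le (padicNorm.sum_le' (fun k hk => ?_) zero_le_one))
    have hkn := Finset.mem_range.mp hk
    have hden : padicNorm p ((n : ℚ) - k + 1) = 1 := by
      rw [← Nat.cast_sub hkn.le, ← Nat.cast_succ, padicNorm.nat_eq_one_iff]
      intro h
      have := Nat.le_of_dvd (by omega) h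
      omega
    rw [padicNorm.mul, padicNorm.div, hden, div_one]
    exact mul_le_one₀ (padicNorm.of_nat _) (padicNorm.nonneg _) (ih k hkn (by omega))

lemma bernoulli'_values : bernoulli' 6 = 1 / 42 ∧ bernoulli' 12 = -691 / 2730 := by
  have h5 : bernoulli' 5 = 0 := bernoulli'_eq_zero_of_odd (by decide) (by norm_num)
  have h7 : bernoulli' 7 = 0 := bernoulli'_eq_zero_of_odd (by decide) (by norm_num)
  have h9 : bernoulli' 9 = 0 := bernoulli'_eq_zero_of_odd (by decide) (by norm_num)
  have h11 : bernoulli' 11 = 0 := bernoulli'_eq_zero_of_odd (by decide) (by norm_num)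
  have h6 : bernoulli' 6 = 1 / 42 := by
    rw [bernoulli'_def]
    norm_num [Finset.sum_range_succ, h5, Nat.choose]
  have h8 : bernoulli' 8 = -1 / 30 := by
    rw [bernoulli'_def]
    norm_num [Finset.sum_range_succ, h5, h6, h7, Nat.choose]
  have h10 : bernoulli' 10 = 5 / 66 := by
    rw [bernoulli'_def]
    norm_num [Finset.sum_range_succ, h5, h6, h7, h8, h9, Nat.choose]
  refine ⟨h6, ?_⟩
  rw [bernoulli'_def]
  norm_num [Finset.sum_range_succ, h5, h6, h7, h8, h9, h10, h11, Nat.choose]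

/-! ### The signature and Â-genus equations -/

/-- Eliminating `P` from the two equations leaves a perfect square. With `b_m = |B_{2m}| / (2m)!`
and `c_m = 2 ^ (2m) (2 ^ (2m - 1) - 1)`, elimination gives `Q b_m² (c_{2m} / 4 + c_m² / 2) = 1`, and
`c_{2m} / 4 + c_m² / 2 = (2 ^ (2m - 1) (2 ^ (2m) - 1))²`. -/
lemma square_equation {m : ℕ} (hm : 1 ≤ m) {P Q : ℚ}
    (h1 : sCoef (2 * m) * P + sHalfCoef (2 * m) * Q = 1)
    (h2 : aCoef (2 * m) * P + aHalfCoef (2 * m) * Q = 0) :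
    Q * (((2 ^ (2 * m - 1) * (2 ^ (2 * m) - 1) : ℕ) : ℚ) * bernoulli' (2 * m)) ^ 2
      = ((2 * m).factorial : ℚ) ^ 2 := by
  have hB : bernoulli (2 * m) = bernoulli' (2 * m) :=
    bernoulli_eq_bernoulli'_of_ne_one (by omega)
  have hF : ((2 * m).factorial : ℚ) ≠ 0 := by exact_mod_cast (2 * m).factorial_ne_zero
  obtain ⟨j, rfl⟩ : ∃ j, m = j + 1 := ⟨m - 1, by omega⟩
  have e1 : 2 * (j + 1) - 1 = 2 * j + 1 := by omega
  have e2 : 2 * (2 * (j + 1)) - 1 = 4 * j + 3 := by omega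
  rw [Nat.cast_mul, Nat.cast_pow, Nat.cast_sub Nat.one_le_two_pow, e1]
  unfold sHalfCoef at h1
  unfold aHalfCoef at h2
  rw [Nat.mul_div_cancel_left _ two_pos] at h1 h2
  unfold sCoef at h1
  unfold aCoef at h2
  rw [e1, e2] at h1
  rw [hB] at h1 h2
  set b := |bernoulli (2 * (2 * (j + 1)))| / ((2 * (2 * (j + 1))).factorial : ℚ) with hb
  set F := ((2 * (j + 1)).factorial : ℚ)
  set B := bernoulli' (2 * (j + 1))
  have hb1 (c : ℚ) : c * |bernoulli (2 * (2 * (j + 1)))| /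
    ((2 * (2 * (j + 1))).factorial : ℚ) = c * b := by rw [hb, mul_div_assoc]
  have hb2 : -|bernoulli (2 * (2 * (j + 1)))| /
    (2 * ((2 * (2 * (j + 1))).factorial : ℚ)) = -b / 2 := by rw [hb]; ring
  rw [hb1] at h1
  rw [hb2] at h2
  generalize b = b at h1 h2
  -- Every power of `2` is expressed through `x = 4 ^ j`, so that the elimination is polynomial.
  have e3 : (2 : ℚ) ^ (2 * (j + 1)) = 4 * 4 ^ j := by rw [pow_mul, pow_succ]; norm_num; ring
  have e4 : (2 : ℚ) ^ (2 * j + 1) = 2 * 4 ^ j := by rw [pow_succ, pow_mul]; norm_num; ring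
  have e5 : (2 : ℚ) ^ (2 * (2 * (j + 1))) = 16 * (4 ^ j) ^ 2 := by
    rw [mul_comm 2 (2 * (j + 1)), pow_mul, e3]; ring
  have e6 : (2 : ℚ) ^ (4 * j + 3) = 8 * (4 ^ j) ^ 2 := by
    rw [show 4 * j + 3 = (2 * j + 1) * 2 + 1 by ring, pow_succ, pow_mul, e4]; ring
  push_cast
  rw [e3, e4, e5, e6] at h1
  rw [e3, e4]
  generalize (4 : ℚ) ^ j = x at *
  have hsq : |B| ^ 2 = B ^ 2 := sq_abs B
  have hkey : Q * (2 * x * (4 * x - 1) * (|B| / F)) ^ 2 = 1 := by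
    have t1 : -|B| / (2 * F) = -(|B| / F) / 2 := by ring
    have t2 (c : ℚ) : c * |B| / F = c * (|B| / F) := mul_div_assoc _ _ _
    rw [t1] at h2
    rw [t2] at h1
    linear_combination h1 + 32 * x ^ 2 * (8 * x ^ 2 - 1) * h2
  field_simp at hkey
  rw [← hkey, hsq]
  ring

/-- For every even integer `k ≥ 6`, there do not exist integers `P`, `Q` with
`s_k · P + s_{k/2,k/2} · Q = 1` and `a_k · P + a_{k/2,k/2} · Q = 0`. -/
theorem stmt_1 (k : ℕ) (heven : Even k) (hk : 6 ≤ k) :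
    ¬ ∃ P Q : ℤ, sCoef k * (P : ℚ) + sHalfCoef k * (Q : ℚ) = 1 ∧
      aCoef k * (P : ℚ) + aHalfCoef k * (Q : ℚ) = 0 := by
  rintro ⟨P, Q, h1, h2⟩
  obtain ⟨m, rfl⟩ := heven.two_dvd
  have hkey := square_equation (by omega) h1 h2
  by_cases hm3 : m = 3
  · subst hm3
    -- Here `Q = 225` is an integer, and it is `P` that fails to be one: `691 P = 158175`.
    rw [bernoulli'_values.1] at hkey
    have hQ : (Q : ℚ) = 225 := by
      norm_num [Nat.factorial] at hkey
      linarith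
    have hB12 : bernoulli 12 = -691 / 2730 := by
      rw [bernoulli_eq_bernoulli'_of_ne_one (by norm_num), bernoulli'_values.2]
    have hB6 : bernoulli 6 = 1 / 42 := by
      rw [bernoulli_eq_bernoulli'_of_ne_one (by norm_num), bernoulli'_values.1]
    rw [hQ] at h2
    norm_num [aHalfCoef, aCoef, hB12, hB6, Nat.factorial, abs_div] at h2
    have hP : (691 * P : ℚ) = 158175 := by linarith
    have hPZ : 691 * P = 158175 := by exact_mod_cast hP
    omega
  by_cases hm6 : m = 6
  · subst hm6
    -- `691` divides the numerator of `B_12` but not `12! * 2730`.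
    rw [bernoulli'_values.2] at hkey
    norm_num [Nat.factorial] at hkey
    have hQ : Q * 4506076053504 = 229442532802560000 := by exact_mod_cast hkey
    omega
  obtain ⟨p, hp, hlt, hdvd⟩ := exists_large_prime (m := m) (by omega) hm6
  have : Fact p.Prime := ⟨hp⟩
  have hnorm := congrArg (padicNorm p) hkey
  have hX : padicNorm p ((2 ^ (2 * m - 1) * (2 ^ (2 * m) - 1) : ℕ) : ℚ) < 1 :=
    (padicNorm.nat_lt_one_iff _).mpr (hdvd.mul_left _)
  have hF : padicNorm p ((2 * m).factorial : ℚ) = 1 :=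
    (padicNorm.nat_eq_one_iff _).mpr fun h => by
      have := (hp.dvd_factorial).mp h
      omega
  rw [pow_two, pow_two, padicNorm.mul, padicNorm.mul, padicNorm.mul, padicNorm.mul, hF,
    one_mul] at hnorm
  have hXB := mul_lt_one_of_nonneg_of_lt_one_left (padicNorm.nonneg _) hX
    (padicNorm_bernoulli'_le_one (p := p) (2 * m) hlt)
  have hXB0 := mul_nonneg (padicNorm.nonneg (p := p)
    ((2 ^ (2 * m - 1) * (2 ^ (2 * m) - 1) : ℕ) : ℚ))
    (padicNorm.nonneg (p := p) (bernoulli' (2 * m)))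
  have hsq := mul_lt_one_of_nonneg_of_lt_one_left hXB0 hXB hXB.le
  have := mul_lt_one_of_nonneg_of_lt_one_right (padicNorm.of_int (p := p) Q)
    (mul_nonneg hXB0 hXB0) hsq
  linarith
end

section
/- For every even integer k ≥ 2, if rational numbers P and Q satisfy s_k · P + s_{k/2,k/2} · Q = 1 and a_k · P + a_{k/2,k/2} · Q = 0, then Q = ( k! / (2^{k−1}(2^k−1)|B_k|) )². -/
/-- For every even integer `k ≥ 2`, if rationals `P`, `Q` satisfy
`s_k · P + s_{k/2,k/2} · Q = 1` and `a_k · P + a_{k/2,k/2} · Q = 0`,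
then `Q = ( k! / (2^{k−1}(2^k−1)|B_k|) )²`. -/
theorem stmt_2 (k : ℕ) (heven : Even k) (hk : 2 ≤ k) (P Q : ℚ)
    (hsign : sCoef k * P + sHalfCoef k * Q = 1)
    (hahat : aCoef k * P + aHalfCoef k * Q = 0) :
    Q = ((k.factorial : ℚ) / (2 ^ (k - 1) * (2 ^ k - 1) * |bernoulli k|)) ^ 2 := by
  obtain ⟨m, rfl⟩ := heven
  have hm : (m + m) / 2 = m := by omega
  have hpow : (2 : ℚ) ^ (m + m) = 2 * 2 ^ (m + m - 1) := by
    rw [← pow_succ']; congr 1; omega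
  have hpow' : (2 : ℚ) ^ (2 * (m + m) - 1) = 2 * (2 ^ (m + m - 1)) ^ 2 := by
    rw [← pow_mul, ← pow_succ']; congr 1; omega
  have hpow'' : (2 : ℚ) ^ (2 * (m + m)) = (2 * 2 ^ (m + m - 1)) ^ 2 := by
    rw [← hpow, ← pow_mul]; congr 1; omega
  simp only [sHalfCoef, aHalfCoef, sCoef, aCoef, hm] at hsign hahat
  rw [hpow', hpow''] at hsign
  rw [← two_mul m] at *
  rw [hpow] at hsign ⊢
  have hf : ((2 * m).factorial : ℚ) ≠ 0 := by positivity
  generalize (2 : ℚ) ^ (2 * m - 1) = Y at *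
  generalize |bernoulli (2 * m)| = c at *
  generalize |bernoulli (2 * (2 * m))| = C at *
  generalize ((2 * m).factorial : ℚ) = f at *
  generalize ((2 * (2 * m)).factorial : ℚ) = F at *
  -- Here `Y = X / 2`, `c / f = b` and `C / F = B`.
  have key : (Y * (2 * Y - 1) * c / f) ^ 2 * Q = 1 := by
    -- The multiplier eliminates `C / F`: it is minus the ratio of the two `C / F` coefficients.
    linear_combination hsign + 8 * Y ^ 2 * (2 * Y ^ 2 - 1) * hahat
  have hne : Y * (2 * Y - 1) * c ≠ 0 := by
    intro h
    simp [h] at key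
  rw [div_pow, eq_div_iff (pow_ne_zero 2 hne)]
  field_simp at key
  linear_combination key
end

section
/- For every even integer k ≥ 2, if rational numbers P and Q satisfy s_k · P + s_{k/2,k/2} · Q = 1 and a_k · P + a_{k/2,k/2} · Q = 0, then P = ( (2k)!·|B_k|² + 2·(k!)²·|B_{2k}| ) / ( 2^{2k}(2^k−1)²·|B_k|²·|B_{2k}| ). -/
/-- Bernoulli numbers of even index do not vanish: by Euler's formula, `B_{2m} = 0` would make
`ζ(2m)`, a sum of nonnegative terms whose first term is `1`, equal to `0`. -/
lemma bernoulli_two_mul_ne_zero (m : ℕ) (hm : m ≠ 0) : bernoulli (2 * m) ≠ 0 := by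
  intro h
  have hs := hasSum_zeta_nat hm
  rw [h] at hs
  have h1 := hs.summable.le_tsum 1 (fun n _ => by positivity)
  rw [hs.tsum_eq] at h1
  norm_num at h1

/-- The system solved for `P`, with `x = 2 ^ k`, `b = |B_k|`, `B = |B_{2k}|`, `F = k!`,
`G = (2k)!`; the exponents `k - 1` and `2 k - 1` appear as divisions by `2`. -/
lemma solve_system (x b B F G P Q : ℚ) (hx : x ≠ 0) (hx1 : x - 1 ≠ 0) (hb : b ≠ 0) (hB : B ≠ 0)
    (hF : F ≠ 0) (hG : G ≠ 0)
    (h1 : x ^ 2 * (x ^ 2 / 2 - 1) * B / G * P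
      + ((x * (x / 2 - 1) * b / F) ^ 2 - x ^ 2 * (x ^ 2 / 2 - 1) * B / G) / 2 * Q = 1)
    (h2 : -B / (2 * G) * P + ((-b / (2 * F)) ^ 2 - -B / (2 * G)) / 2 * Q = 0) :
    P = (G * b ^ 2 + 2 * F ^ 2 * B) / (x ^ 2 * (x - 1) ^ 2 * b ^ 2 * B) := by
  -- Cramer's rule for `P`
  have key : P * (x ^ 2 * (x - 1) ^ 2 * b ^ 2 * B / (8 * F ^ 2 * G))
      = ((-b / (2 * F)) ^ 2 - -B / (2 * G)) / 2 := by
    linear_combination (((-b / (2 * F)) ^ 2 - -B / (2 * G)) / 2) * h1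
      - (((x * (x / 2 - 1) * b / F) ^ 2 - x ^ 2 * (x ^ 2 / 2 - 1) * B / G) / 2) * h2
  rw [eq_div_iff (by positivity)]
  field_simp at key
  linear_combination key / 8

/-- For every even integer `k ≥ 2`, if rationals `P`, `Q` satisfy
`s_k · P + s_{k/2,k/2} · Q = 1` and `a_k · P + a_{k/2,k/2} · Q = 0`, then
`P = ((2k)!·|B_k|² + 2·(k!)²·|B_{2k}|) / (2^{2k}(2^k−1)²·|B_k|²·|B_{2k}|)`. -/
theorem stmt_3 (k : ℕ) (heven : Even k) (hk : 2 ≤ k) (P Q : ℚ)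
    (hsign : sCoef k * P + sHalfCoef k * Q = 1)
    (hahat : aCoef k * P + aHalfCoef k * Q = 0) :
    P = (((2 * k).factorial : ℚ) * |bernoulli k| ^ 2
          + 2 * (k.factorial : ℚ) ^ 2 * |bernoulli (2 * k)|) /
        (2 ^ (2 * k) * (2 ^ k - 1) ^ 2 * |bernoulli k| ^ 2 * |bernoulli (2 * k)|) := by
  obtain ⟨j, rfl⟩ := heven
  have hj : j ≠ 0 := by omega
  have hhalf : (j + j) / 2 = j := by omega
  have hpow (n : ℕ) (hn : n ≠ 0) : (2 : ℚ) ^ (n - 1) = 2 ^ n / 2 := by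
    rw [eq_div_iff two_ne_zero, pow_sub_one_mul hn]
  have hx1 : (2 : ℚ) ^ (j + j) - 1 ≠ 0 :=
    sub_ne_zero.mpr (one_lt_pow₀ one_lt_two (by omega)).ne'
  have hsq : (2 : ℚ) ^ (2 * (j + j)) = (2 ^ (j + j)) ^ 2 := by rw [← pow_mul, mul_comm]
  have hb : |bernoulli (j + j)| ≠ 0 :=
    abs_ne_zero.mpr (two_mul j ▸ bernoulli_two_mul_ne_zero j hj)
  have hB : |bernoulli (2 * (j + j))| ≠ 0 :=
    abs_ne_zero.mpr (bernoulli_two_mul_ne_zero _ (by omega))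
  simp only [sHalfCoef, aHalfCoef, hhalf, sCoef, aCoef, hpow (2 * (j + j)) (by omega),
    hpow (j + j) (by omega), hsq, two_mul j] at hsign hahat
  rw [hsq]
  exact solve_system _ _ _ _ _ P Q (by positivity) hx1 hb hB (by positivity) (by positivity)
    hsign hahat
end

section
/- For every even integer k ≥ 14, if integers P, Q and S satisfy s_k · P + s_{k/2,k/2} · Q = S and a_k · P + a_{k/2,k/2} · Q = 0, then S = 0 or |S| ≥ (2k+1)². (Arithmetic content of the Proposition: if an oriented closed manifold of dimension 4k > 48 has all Pontrjagin numbers zero except possibly p_{k/2}²[M] and p_k[M], and Â(M) = 0, then sign(M) = 0 or |sign(M)| ≥ (2k+1)².) -/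
/-! ### A lower bound for the totient -/

theorem totient_prime_pow_bound {p a : ℕ} (hp : p.Prime) (h5 : 5 ≤ p) (ha : 0 < a) :
    (p ^ a) ^ 2 ≤ (p ^ a).totient ^ 3 := by
  obtain ⟨b, rfl⟩ : ∃ b, a = b + 1 := ⟨a - 1, by omega⟩
  obtain ⟨q, rfl⟩ : ∃ q, p = q + 1 := ⟨p - 1, by omega⟩
  rw [Nat.totient_prime_pow_succ hp]
  have h1 : (q + 1) ^ 2 ≤ q ^ 3 := by
    have : 4 ≤ q := by omega
    nlinarith [mul_le_mul this (le_refl (q * q)) (by positivity) (by positivity)]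
  have h2 : ((q + 1) ^ b) ^ 2 ≤ ((q + 1) ^ b) ^ 3 :=
    Nat.pow_le_pow_right (by positivity) (by norm_num)
  calc ((q + 1) ^ (b + 1)) ^ 2 = ((q + 1) ^ b) ^ 2 * (q + 1) ^ 2 := by ring
    _ ≤ ((q + 1) ^ b) ^ 3 * q ^ 3 := Nat.mul_le_mul h2 h1
    _ = _ := by simp [mul_pow]

theorem totient_bound_of_coprime_six (m : ℕ) (h2 : ¬ 2 ∣ m) (h3 : ¬ 3 ∣ m) :
    m ^ 2 ≤ m.totient ^ 3 := by
  induction m using Nat.recOnPosPrimePosCoprime with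
  | zero => simp
  | one => simp
  | prime_pow p n hp hn =>
    refine totient_prime_pow_bound hp ?_ hn
    have := hp.two_le
    have a2 : p ≠ 2 := fun h => h2 (h ▸ dvd_pow_self p hn.ne')
    have a3 : p ≠ 3 := fun h => h3 (h ▸ dvd_pow_self p hn.ne')
    have a4 : p ≠ 4 := fun h => absurd (h ▸ hp) (by norm_num)
    omega
  | coprime a b _ _ hab iha ihb =>
    rw [Nat.totient_mul hab, mul_pow, mul_pow]
    exact Nat.mul_le_mul
      (iha (fun h => h2 (h.mul_right b)) (fun h => h3 (h.mul_right b)))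
      (ihb (fun h => h2 (h.mul_left a)) (fun h => h3 (h.mul_left a)))

/-- The function `n ↦ φ(n)³ / n²` is multiplicative. It is at least `1/4` at powers of `2`, at least
`8/9` at powers of `3` and at least `1` at other prime powers, hence at least `1/4 * 8/9 = 2/9`
everywhere. -/
theorem totient_bound (n : ℕ) (hn : n ≠ 0) : 2 * n ^ 2 ≤ 9 * n.totient ^ 3 := by
  obtain ⟨a, n', h2, rfl⟩ := Nat.exists_eq_pow_mul_and_not_dvd hn 2 (by norm_num)
  have hn' : n' ≠ 0 := by rintro rfl; simp at hn
  obtain ⟨b, m, h3, rfl⟩ := Nat.exists_eq_pow_mul_and_not_dvd hn' 3 (by norm_num)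
  have c3 : (3 ^ b).Coprime m := ((Nat.Prime.coprime_iff_not_dvd Nat.prime_three).2 h3).pow_left b
  have c2 : (2 ^ a).Coprime (3 ^ b * m) :=
    ((Nat.Prime.coprime_iff_not_dvd Nat.prime_two).2 h2).pow_left a
  have hm := totient_bound_of_coprime_six m (fun h => h2 (h.mul_left _)) h3
  have ha : (2 ^ a) ^ 2 ≤ 4 * (2 ^ a).totient ^ 3 := by
    rcases a with _ | a
    · simp
    · rw [Nat.totient_prime_pow_succ Nat.prime_two]
      have : (2 ^ a) ^ 2 ≤ (2 ^ a) ^ 3 := Nat.pow_le_pow_right (by positivity) (by norm_num)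
      calc (2 ^ (a + 1)) ^ 2 = 4 * (2 ^ a) ^ 2 := by ring
        _ ≤ 4 * (2 ^ a) ^ 3 := by omega
        _ = _ := by ring
  have hb : 8 * (3 ^ b) ^ 2 ≤ 9 * (3 ^ b).totient ^ 3 := by
    rcases b with _ | b
    · simp
    · rw [Nat.totient_prime_pow_succ Nat.prime_three]
      have : (3 ^ b) ^ 2 ≤ (3 ^ b) ^ 3 := Nat.pow_le_pow_right (by positivity) (by norm_num)
      calc 8 * (3 ^ (b + 1)) ^ 2 = 72 * (3 ^ b) ^ 2 := by ring
        _ ≤ 72 * (3 ^ b) ^ 3 := by omega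
        _ = _ := by ring
  rw [Nat.totient_mul c2, Nat.totient_mul c3]
  have := Nat.mul_le_mul ha (Nat.mul_le_mul hb hm)
  have e1 : (2 ^ a) ^ 2 * (8 * (3 ^ b) ^ 2 * m ^ 2) = 4 * (2 * (2 ^ a * (3 ^ b * m)) ^ 2) := by ring
  have e2 : 4 * (2 ^ a).totient ^ 3 * (9 * (3 ^ b).totient ^ 3 * m.totient ^ 3)
    = 4 * (9 * ((2 ^ a).totient * ((3 ^ b).totient * m.totient)) ^ 3) := by ring
  omega

theorem exp_bound (f : ℕ) (hf : 35 ≤ f) : 402 * f ^ 9 ≤ 3 ^ f := by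
  induction f, hf using Nat.le_induction with
  | base => norm_num
  | succ f hf ih =>
    have h : (35 * (f + 1)) ^ 9 ≤ (36 * f) ^ 9 := Nat.pow_le_pow_left (by omega) 9
    rw [mul_pow, mul_pow] at h
    norm_num at h
    rw [pow_succ 3 f]
    omega

/-- With `f = φ(k)`, the hypothesis is `totient_bound`. It gives `k ⁶ ≤ 729/8 * f ⁹`, so the left side
is at most `402 * f ⁹`, and it forces `f ≥ 35` for `k ≥ 421`. -/
theorem poly_le_exp {k f : ℕ} (hk : 421 ≤ k) (h : 2 * k ^ 2 ≤ 9 * f ^ 3) :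
    (k * ((k + 1) * (2 * k + 1))) ^ 2 ≤ 3 ^ f := by
  have hf : 35 ≤ f := by
    by_contra! hlt
    have h1 : f ^ 3 ≤ 34 ^ 3 := Nat.pow_le_pow_left (by omega) 3
    have h2 : 421 ^ 2 ≤ k ^ 2 := Nat.pow_le_pow_left hk 2
    omega
  have h1 : 10 * (k * ((k + 1) * (2 * k + 1))) ≤ 21 * k ^ 3 := by
    have : 10 * ((k + 1) * (2 * k + 1)) ≤ 21 * k ^ 2 := by nlinarith
    nlinarith [Nat.mul_le_mul_left k this]
  have h2 := Nat.pow_le_pow_left h1 2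
  have h3 := Nat.pow_le_pow_left h 3
  have h4 := exp_bound f hf
  have e1 : (2 * k ^ 2) ^ 3 = 8 * k ^ 6 := by ring
  have e2 : (9 * f ^ 3) ^ 3 = 729 * f ^ 9 := by ring
  have e3 : (21 * k ^ 3) ^ 2 = 441 * k ^ 6 := by ring
  rw [mul_pow, e3] at h2
  rw [e1, e2] at h3
  omega

/-! ### The size and the prime factors of `Φ_k(2)` -/

open Polynomial in
/-- The bound `(x - 1) ^ φ(n) ≤ Φ_n(x)` is void at `x = 2`. Since `Φ_n(x ^ p)` is
`Φ_{np}(x)` or `Φ_{np}(x) * Φ_n(x)`, it can be applied at `x = 2 ^ p` instead. -/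
theorem cyclotomic_two_lower_aux {n p : ℕ} (hp : p.Prime) (h : p ∣ n ∨ 5 ≤ p) :
    (3 : ℝ) ^ (n * p).totient ≤ ((cyclotomic (n * p) ℝ).eval 2) ^ 2 := by
  have hp2 := hp.two_le
  have h1 : (1 : ℝ) < 2 ^ p := one_lt_pow₀ (by norm_num) hp.ne_zero
  have hlow := sub_one_pow_totient_le_cyclotomic_eval h1 n
  by_cases hd : p ∣ n
  · have hE := congrArg (eval (2 : ℝ)) (cyclotomic_expand_eq_cyclotomic hp hd ℝ)
    rw [expand_eval] at hE
    rw [← hE, mul_comm n p, Nat.totient_mul_of_prime_of_dvd hp hd, pow_mul]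
    have hb : (3 : ℝ) ^ p ≤ (2 ^ p - 1) ^ 2 := by
      clear * - hp2
      induction p, hp2 using Nat.le_induction with
      | base => norm_num
      | succ p hp ih =>
        have : (4 : ℝ) ≤ 2 ^ p := by
          calc (4 : ℝ) = 2 ^ 2 := by norm_num
            _ ≤ 2 ^ p := pow_le_pow_right₀ (by norm_num) hp
        rw [pow_succ, pow_succ 2 p]
        nlinarith
    calc ((3 : ℝ) ^ p) ^ n.totient ≤ ((2 ^ p - 1) ^ 2) ^ n.totient :=
          pow_le_pow_left₀ (by positivity) hb _
      _ = ((2 ^ p - 1) ^ n.totient) ^ 2 := by rw [← pow_mul, ← pow_mul, mul_comm]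
      _ ≤ _ := pow_le_pow_left₀ (pow_nonneg (by linarith) _) hlow 2
  · have h5 : 5 ≤ p := h.resolve_left hd
    have hE := congrArg (eval (2 : ℝ)) (cyclotomic_expand_eq_cyclotomic_mul hp hd ℝ)
    rw [expand_eval, eval_mul] at hE
    have hup := cyclotomic_eval_le_add_one_pow_totient (q := 2) (by norm_num) n
    have hpos : 0 ≤ (cyclotomic (n * p) ℝ).eval 2 := cyclotomic_nonneg _ (by norm_num)
    have hb : (3 : ℝ) ^ (p + 1) ≤ (2 ^ p - 1) ^ 2 := by
      clear * - h5
      induction p, h5 using Nat.le_induction with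
      | base => norm_num
      | succ p hp ih =>
        have : (4 : ℝ) ≤ 2 ^ p := by
          calc (4 : ℝ) = 2 ^ 2 := by norm_num
            _ ≤ 2 ^ p := pow_le_pow_right₀ (by norm_num) (by omega)
        rw [pow_succ, pow_succ 2 p]
        nlinarith
    rw [mul_comm n p, Nat.totient_mul_of_prime_of_not_dvd hp hd, mul_comm p n, pow_mul]
    have hc : (0 : ℝ) < (9 : ℝ) ^ n.totient := by positivity
    refine le_of_mul_le_mul_right ?_ hc
    norm_num at hup
    calc ((3 : ℝ) ^ (p - 1)) ^ n.totient * 9 ^ n.totient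
        = ((3 : ℝ) ^ (p + 1)) ^ n.totient := by
          rw [← mul_pow]; congr 1
          obtain ⟨q, rfl⟩ : ∃ q, p = q + 1 := ⟨p - 1, by omega⟩
          simp only [Nat.add_sub_cancel]; ring
      _ ≤ ((2 ^ p - 1) ^ 2) ^ n.totient := pow_le_pow_left₀ (by positivity) hb _
      _ = ((2 ^ p - 1) ^ n.totient) ^ 2 := by rw [← pow_mul, ← pow_mul, mul_comm]
      _ ≤ ((cyclotomic (n * p) ℝ).eval 2 * 3 ^ n.totient) ^ 2 := by
          refine pow_le_pow_left₀ (pow_nonneg (by linarith) _) ?_ 2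
          exact (hlow.trans_eq hE).trans (mul_le_mul_of_nonneg_left hup hpos)
      _ = _ := by
          rw [mul_pow, ← pow_mul, mul_comm _ 2, pow_mul]; norm_num

open Polynomial in
/-- The primes `p` to which `cyclotomic_two_lower_aux` does not apply are `2` and `3` when they
divide `k` exactly once, so it fails only for divisors of `6`. -/
theorem cyclotomic_two_lower {k : ℕ} (hk : 6 < k) :
    (3 : ℝ) ^ k.totient ≤ ((cyclotomic k ℝ).eval 2) ^ 2 := by
  obtain ⟨n, p, rfl, hp, h⟩ : ∃ n p, k = n * p ∧ p.Prime ∧ (p ∣ n ∨ 5 ≤ p) := by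
    by_contra! H
    have hsq : Squarefree k := by
      rw [Nat.squarefree_iff_prime_squarefree]
      rintro p hp ⟨c, hc⟩
      exact (H (p * c) p (by rw [hc]; ring) hp).1 (Dvd.intro _ rfl)
    have h6 : k ∣ 6 := by
      rw [← Nat.prod_primeFactors_of_squarefree hsq]
      have hsub : k.primeFactors ⊆ {2, 3} := by
        intro p hp
        have hpp := Nat.prime_of_mem_primeFactors hp
        obtain ⟨c, hc⟩ := Nat.dvd_of_mem_primeFactors hp
        have := (H c p (by rw [hc]; ring) hpp).2
        have := hpp.two_le
        interval_cases p
        · simp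
        · simp
        · norm_num at hpp
      simpa using Finset.prod_dvd_prod_of_subset _ _ (fun p : ℕ => p) hsub
    exact absurd (Nat.le_of_dvd (by norm_num) h6) (by omega)
  exact cyclotomic_two_lower_aux hp h

open Polynomial in
/-- With `y = 2 ^ (k/q)`, the number `Φ_k(2)` divides `(y ^ q - 1) / (y - 1)`, whose `q`-adic
valuation is at most `1` by lifting the exponent. -/
theorem not_sq_dvd_cyclotomic {k q F : ℕ} (hk : k ≠ 0) (hF : ((cyclotomic k ℤ).eval 2) = F)
    (hq : q.Prime) (hqk : q ∣ k) : ¬ q ^ 2 ∣ F := by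
  intro hqF
  have := Fact.mk hq
  obtain ⟨n, rfl⟩ := hqk
  have hn : n ≠ 0 := by rintro rfl; simp at hk
  have hmem : n ∈ (q * n).properDivisors := by
    rw [Nat.mem_properDivisors]
    exact ⟨Dvd.intro_left _ rfl, by nlinarith [hq.two_le, Nat.pos_of_ne_zero hn]⟩
  have hdvd := eval_dvd (x := (2 : ℤ)) (X_pow_sub_one_mul_cyclotomic_dvd_X_pow_sub_one_of_dvd ℤ hmem)
  simp only [eval_mul, eval_sub, eval_pow, eval_X, eval_one, hF] at hdvd
  have hy : 2 ≤ 2 ^ n := by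
    calc 2 = 2 ^ 1 := rfl
      _ ≤ 2 ^ n := Nat.pow_le_pow_right (by norm_num) (by omega)
  set y := 2 ^ n with hydef
  have hdvd' : (y - 1) * F ∣ y ^ q - 1 := by
    zify [show 1 ≤ y by omega, Nat.one_le_pow q y (by omega)]
    rw [hydef]; push_cast
    rwa [← pow_mul, mul_comm n q]
  have hq1 : q ∣ y ^ q - 1 :=
    ((dvd_pow_self q two_ne_zero).trans hqF).trans ((Dvd.intro_left _ rfl).trans hdvd')
  have hne : y ^ q - 1 ≠ 0 := by
    have : y ^ 1 ≤ y ^ q := Nat.pow_le_pow_right (by omega) hq.one_le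
    rw [pow_one] at this; omega
  have hqy : q ∣ y - 1 := by
    rw [← ZMod.natCast_eq_zero_iff, Nat.cast_sub (by omega)]
    rw [← ZMod.natCast_eq_zero_iff, Nat.cast_sub (Nat.one_le_pow _ _ (by omega))] at hq1
    simpa [ZMod.pow_card] using hq1
  have hny : ¬ q ∣ y := by
    intro h
    have := (Nat.dvd_sub h hqy)
    rw [show y - (y - 1) = 1 by omega] at this
    exact hq.one_lt.ne' (Nat.dvd_one.1 this)
  have hodd : Odd q := by
    refine hq.odd_of_ne_two ?_
    rintro rfl
    exact hny (dvd_pow_self 2 hn)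
  have hv := padicValNat.pow_sub_pow (p := q) hodd (x := y) (y := 1) (by omega) hqy hny hq.ne_zero
  rw [one_pow, padicValNat_self] at hv
  have hF0 : F ≠ 0 := by
    rintro rfl
    rw [mul_zero, zero_dvd_iff] at hdvd'
    exact hne hdvd'
  have h2 := padicValNat_dvd_iff_le hF0 |>.1 hqF
  have h3 : padicValNat q ((y - 1) * F) ≤ padicValNat q (y ^ q - 1) :=
    (padicValNat_dvd_iff_le hne).1 (pow_padicValNat_dvd.trans hdvd')
  rw [padicValNat.mul (by omega) hF0] at h3
  omega

open Polynomial in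
/-- Such a prime `q` is primitive: `2` has order exactly `k` modulo `q`, so `k ∣ q - 1`. -/
theorem lt_of_prime_dvd_cyclotomic {k q F : ℕ} (hk : k ≠ 0) (hF : ((cyclotomic k ℤ).eval 2) = F)
    (hq : q.Prime) (hqk : ¬ q ∣ k) (hqF : q ∣ F) : k < q := by
  have := Fact.mk hq
  have hroot : IsRoot (cyclotomic k (ZMod q)) ((2 : ℕ) : ZMod q) := by
    rw [IsRoot.def, ← map_cyclotomic_int k (ZMod q)]
    have := eval_intCast_map (Int.castRingHom (ZMod q)) (cyclotomic k ℤ) 2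
    push_cast at this ⊢
    rw [this, hF]
    simpa using (ZMod.natCast_eq_zero_iff F q).2 hqF
  have hpb : ¬ q ∣ 2 :=
    hq.coprime_iff_not_dvd.1 (coprime_of_root_cyclotomic (Nat.pos_of_ne_zero hk) hroot).symm
  have hdiv : orderOf ((2 : ℕ) : ZMod q) ∣ q - 1 :=
    ZMod.orderOf_dvd_card_sub_one (mt (CharP.cast_eq_zero_iff _ _ _).1 hpb)
  have : NeZero (k : ZMod q) := NeZero.of_not_dvd (ZMod q) hqk
  have : k = orderOf ((2 : ℕ) : ZMod q) := (isRoot_cyclotomic_iff.mp hroot).eq_orderOf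
  rw [← this] at hdiv
  have := Nat.le_of_dvd (by have := hq.two_le; omega) hdiv
  have := hq.two_le
  omega

/-! ### A divisor of `2 ^ k - 1` coprime to `k!` -/

/-- For even `14 ≤ k ≤ 420`, removing from `2 ^ k - 1` its `k!`-smooth part leaves a divisor of the
kind required by `exists_divisor`. The exponent `2` on `k!` is large enough for the gcd to be
the whole smooth part throughout this range. -/
theorem divisor_small_range : ∀ i < 204, let k := 14 + 2 * i
    let r := (2 ^ k - 1) / Nat.gcd (2 ^ k - 1) (k.factorial ^ 2)
    Nat.gcd r k.factorial = 1 ∧ (2 * k + 1) * Nat.gcd r (k + 1) ≤ r := by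
  decide +kernel

open Polynomial in
/-- The divisor is `Φ_k(2) / gcd(Φ_k(2), k)`. -/
theorem exists_divisor_large {k : ℕ} (hk : 421 ≤ k) :
    ∃ r, r ∣ 2 ^ k - 1 ∧ r.Coprime k.factorial ∧ (2 * k + 1) * r.gcd (k + 1) ≤ r := by
  obtain ⟨F, hF⟩ : ∃ F : ℕ, ((cyclotomic k ℤ).eval 2) = F :=
    ⟨_, (Int.toNat_of_nonneg (cyclotomic_nonneg k (by norm_num))).symm⟩
  have hFR : (cyclotomic k ℝ).eval 2 = F := by
    have := eval_intCast_map (Int.castRingHom ℝ) (cyclotomic k ℤ) 2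
    rw [map_cyclotomic] at this
    simpa [hF] using this
  have hbig : k * ((k + 1) * (2 * k + 1)) ≤ F := by
    have h1 := cyclotomic_two_lower (k := k) (by omega)
    rw [hFR] at h1
    have h2 : 3 ^ k.totient ≤ F ^ 2 := by exact_mod_cast h1
    have h3 := poly_le_exp hk (totient_bound k (by omega))
    exact (Nat.pow_le_pow_iff_left two_ne_zero).1 (h3.trans h2)
  have hFdvd : F ∣ 2 ^ k - 1 := by
    have := eval_dvd (x := (2 : ℤ)) (cyclotomic.dvd_X_pow_sub_one k ℤ)
    simp only [eval_sub, eval_pow, eval_X, eval_one, hF] at this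
    zify [Nat.one_le_two_pow (n := k)]
    exact this
  obtain ⟨r, hr⟩ := Nat.gcd_dvd_left F k
  have hrF : r ∣ F := ⟨_, hr.trans (mul_comm _ _)⟩
  refine ⟨r, hrF.trans hFdvd, ?_, ?_⟩
  · refine Nat.Coprime.symm (Nat.coprime_of_dvd fun q hq hqk hqr => ?_)
    have hle : q ≤ k := (hq.dvd_factorial).1 hqk
    by_cases hd : q ∣ k
    · refine not_sq_dvd_cyclotomic (by omega) hF hq hd ?_
      rw [hr, pow_two]
      exact mul_dvd_mul (Nat.dvd_gcd (hqr.trans hrF) hd) hqr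
    · exact absurd (lt_of_prime_dvd_cyclotomic (by omega) hF hq hd (hqr.trans hrF)) (by omega)
  · have h1 : F.gcd k ≤ k := Nat.gcd_le_right _ (by omega)
    have h2 : r.gcd (k + 1) ≤ k + 1 := Nat.gcd_le_right _ (by omega)
    have h3 : k * ((k + 1) * (2 * k + 1)) ≤ k * r :=
      hbig.trans (hr.le.trans (Nat.mul_le_mul_right r h1))
    have h4 := Nat.le_of_mul_le_mul_left h3 (by omega)
    calc _ ≤ (2 * k + 1) * (k + 1) := Nat.mul_le_mul_left _ h2
      _ ≤ r := by rwa [mul_comm]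

/-- A large divisor of `2 ^ k - 1` coprime to `k!`. The factor `r.gcd (k + 1)` allows for the case
where `k + 1` is a prime dividing both `r` and the denominator of `B_k`. -/
theorem exists_divisor {k : ℕ} (heven : Even k) (hk : 14 ≤ k) :
    ∃ r, r ∣ 2 ^ k - 1 ∧ r.Coprime k.factorial ∧ (2 * k + 1) * r.gcd (k + 1) ≤ r := by
  by_cases hlarge : 421 ≤ k
  · exact exists_divisor_large hlarge
  · obtain ⟨h, rfl⟩ := heven
    have := divisor_small_range (h - 7) (by omega)
    rw [show 14 + 2 * (h - 7) = h + h by omega] at this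
    exact ⟨_, Nat.div_dvd_of_dvd (Nat.gcd_dvd_left _ _), this⟩

/-! ### Denominators and the signature -/

/-- By von Staudt-Clausen, `B_{2h}` is an integer minus a sum of `1 / p` over distinct primes
`p ≤ 2h + 1`. -/
theorem bernoulli_integrality (h : ℕ) :
    ∃ z : ℤ, ((2 * h + 1).factorial : ℚ) * |bernoulli (2 * h)| = z := by
  obtain ⟨w, hw⟩ := Bernoulli.vonStaudt_clausen h
  set s := (Finset.range (2 * h + 2)).filter fun p => p.Prime ∧ (p - 1) ∣ 2 * h with hs
  have hb : ((2 * h + 1).factorial : ℚ) * bernoulli (2 * h) =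
      (((2 * h + 1).factorial * w - ∑ p ∈ s, ((2 * h + 1).factorial / p : ℕ) : ℤ) : ℚ) := by
    push_cast
    rw [hw, mul_add, Finset.mul_sum, add_sub_assoc, ← Finset.sum_sub_distrib, left_eq_add]
    refine Finset.sum_eq_zero fun p hp => ?_
    simp only [hs, Finset.mem_filter, Finset.mem_range] at hp
    rw [Int.cast_div (by exact_mod_cast Nat.dvd_factorial hp.2.1.pos (by omega))
      (by exact_mod_cast hp.2.1.ne_zero), Int.cast_natCast, Int.cast_natCast]
    ring
  refine ⟨|(2 * h + 1).factorial * w - ∑ p ∈ s, ((2 * h + 1).factorial / p : ℕ)|, ?_⟩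
  rw [Int.cast_abs, ← hb, abs_mul, Nat.abs_cast]

/-- For `g = gcd(r, k + 1)`, the number `r / g` is coprime to `k!` and to `(k + 1) / g`, so its square
survives in `S`; and `r / g ≥ 2k + 1`. -/
theorem sq_le_of_dvd {k r : ℕ} {Q S z c : ℤ} (hS : S ≠ 0) (hr : r ∣ 2 ^ k - 1)
    (hcop : r.Coprime k.factorial) (hle : (2 * k + 1) * r.gcd (k + 1) ≤ r)
    (h : S * (k.factorial * (k + 1).factorial) ^ 2 = (c * (2 ^ k - 1) * z) ^ 2 * Q) :
    (2 * (k : ℤ) + 1) ^ 2 ≤ |S| := by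
  obtain ⟨w, hw⟩ := hr
  have hw' : (2 : ℤ) ^ k - 1 = r * w := by
    have : ((2 ^ k - 1 : ℕ) : ℤ) = ((r * w : ℕ) : ℤ) := by rw [hw]
    rw [Nat.cast_sub Nat.one_le_two_pow] at this
    push_cast at this; exact this
  obtain ⟨r', hr'⟩ := Nat.gcd_dvd_left r (k + 1)
  obtain ⟨t, ht⟩ := Nat.gcd_dvd_right r (k + 1)
  set g := r.gcd (k + 1) with hg
  have hg0 : 0 < g := Nat.gcd_pos_of_pos_right _ (by omega)
  have hct : r'.Coprime t := by
    have := Nat.coprime_div_gcd_div_gcd (m := r) (n := k + 1) hg0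
    rwa [← hg, Nat.div_eq_of_eq_mul_right hg0 hr', Nat.div_eq_of_eq_mul_right hg0 ht] at this
  have hcf : r'.Coprime k.factorial := Nat.Coprime.coprime_dvd_left ⟨g, by rw [hr']; ring⟩ hcop
  have hdvd : ((r' : ℤ)) ^ 2 ∣ S * ((t * (k.factorial * k.factorial) : ℕ) : ℤ) ^ 2 := by
    refine ⟨(c * w * z) ^ 2 * Q, ?_⟩
    have hg2 : (g : ℤ) ^ 2 ≠ 0 := by positivity
    refine mul_left_cancel₀ hg2 ?_
    have ht' : (k : ℤ) + 1 = g * t := by exact_mod_cast ht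
    have hr'' : (r : ℤ) = g * r' := by exact_mod_cast hr'
    rw [Nat.factorial_succ, hw', hr''] at h
    push_cast at h ⊢
    rw [ht'] at h
    linear_combination h
  have hc : IsCoprime ((r' : ℤ) ^ 2) (((t * (k.factorial * k.factorial) : ℕ) : ℤ) ^ 2) :=
    (Nat.isCoprime_iff_coprime.2 (hct.mul_right (hcf.mul_right hcf))).pow
  have hS2 : (r' : ℤ) ^ 2 ∣ |S| := (dvd_abs _ _).2 (hc.dvd_of_dvd_mul_right hdvd)
  have h1 : (r' : ℤ) ^ 2 ≤ |S| := Int.le_of_dvd (abs_pos.2 hS) hS2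
  have h2 : 2 * k + 1 ≤ r' := by
    rw [mul_comm] at hle
    exact Nat.le_of_mul_le_mul_left (hle.trans_eq hr') hg0
  have h3 : 2 * (k : ℤ) + 1 ≤ r' := by exact_mod_cast h2
  exact (pow_le_pow_left₀ (by positivity) h3 2).trans h1

/-- Eliminating `P`: the second equation turns the first into a rational square times `Q`, because
`2^{2k-1} - 1 + 2 (2^{k-1} - 1)² = (2^k - 1)²`. -/
theorem signature_eq (h : ℕ) (hh : 1 ≤ h) (P Q S : ℚ)
    (hsign : sCoef (2 * h) * P + sHalfCoef (2 * h) * Q = S)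
    (hahat : aCoef (2 * h) * P + aHalfCoef (2 * h) * Q = 0) :
    S = (2 ^ (2 * h - 1) * (2 ^ (2 * h) - 1) *
      (|bernoulli (2 * h)| / (2 * h).factorial)) ^ 2 * Q := by
  have hdiv : 2 * h / 2 = h := by omega
  simp only [sHalfCoef, aHalfCoef, sCoef, aCoef, hdiv] at hsign hahat
  obtain ⟨n, rfl⟩ : ∃ n, h = n + 1 := ⟨h - 1, by omega⟩
  rw [show 2 * (2 * (n + 1)) - 1 = 4 * n + 3 by omega,
    show 2 * (2 * (n + 1)) = 4 * n + 4 by omega] at hsign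
  rw [show 2 * (2 * (n + 1)) = 4 * n + 4 by omega] at hahat
  rw [show 2 * (n + 1) - 1 = 2 * n + 1 by omega, show 2 * (n + 1) = 2 * n + 2 by omega] at *
  simp only [mul_div_assoc, neg_div, div_mul_eq_div_div_swap] at hsign hahat
  set b := |bernoulli (4 * n + 4)| / ((4 * n + 4).factorial : ℚ)
  set c := |bernoulli (2 * n + 2)| / ((2 * n + 2).factorial : ℚ)
  rw [← hsign]
  have e1 : (2 : ℚ) ^ (4 * n + 4) = 16 * (2 ^ n) ^ 4 := by ring
  have e2 : (2 : ℚ) ^ (4 * n + 3) = 8 * (2 ^ n) ^ 4 := by ring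
  have e3 : (2 : ℚ) ^ (2 * n + 2) = 4 * (2 ^ n) ^ 2 := by ring
  have e4 : (2 : ℚ) ^ (2 * n + 1) = 2 * (2 ^ n) ^ 2 := by ring
  rw [e1, e2, e3, e4]
  -- The coefficient is `-2 * s_k / b`, which cancels the `p_k`-terms `s_k * (P - Q / 2)`.
  linear_combination (-2 * (16 * (2 ^ n : ℚ) ^ 4) * (8 * (2 ^ n) ^ 4 - 1)) * hahat

/-- For every even integer `k ≥ 14`, if integers `P`, `Q`, `S` satisfy
`s_k · P + s_{k/2,k/2} · Q = S` and `a_k · P + a_{k/2,k/2} · Q = 0`,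
then `S = 0` or `|S| ≥ (2k+1)²`. -/
theorem stmt_5 (k : ℕ) (heven : Even k) (hk : 14 ≤ k) (P Q S : ℤ)
    (hsign : sCoef k * (P : ℚ) + sHalfCoef k * (Q : ℚ) = (S : ℚ))
    (hahat : aCoef k * (P : ℚ) + aHalfCoef k * (Q : ℚ) = 0) :
    S = 0 ∨ (2 * (k : ℤ) + 1) ^ 2 ≤ |S| := by
  by_cases hS : S = 0
  · exact Or.inl hS
  refine Or.inr ?_
  obtain ⟨r, hr, hcop, hle⟩ := exists_divisor heven hk
  obtain ⟨h, rfl⟩ := heven.two_dvd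
  obtain ⟨z, hz⟩ := bernoulli_integrality h
  have hmain := signature_eq h (by omega) P Q S hsign hahat
  refine sq_le_of_dvd (Q := Q) (z := z) (c := 2 ^ (2 * h - 1)) hS hr hcop hle ?_
  have hf : ((2 * h).factorial : ℚ) ≠ 0 := by positivity
  have : (S : ℚ) * ((2 * h).factorial * (2 * h + 1).factorial) ^ 2 =
      (2 ^ (2 * h - 1) * (2 ^ (2 * h) - 1) * z) ^ 2 * Q := by
    rw [hmain, ← hz]
    field_simp
  exact_mod_cast this
end

section
/- For every even integer k ≥ 8, the rational number ( k! / (2^{k−1}(2^k−1)|B_k|) )² is not an integer. (For 8 ≤ k ≤ 12 this follows by direct computation, and for k ≥ 14 from Schinzel's lower bound on the largest prime factor of 2^k − 1 together with the von Staudt–Clausen description of the denominator of B_k.) -/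
/-! Write `x = k! / (2^(k-1) (2^k - 1) |B_k|)`. A rational number whose square is an integer is itself
an integer, so suppose that `x` is a positive integer.

Size. Euler's formula `2^(k-1) π^k |B_k| = k! ζ(k)` and `ζ(k) ≥ 1` give `x ≤ π^k / (2^k - 1)`
(`factorial_le_bernoulli`), which is about `(π/2)^k`.

Divisibility. By von Staudt–Clausen, `3` divides the denominator of `B_k`
(`three_dvd_den_bernoulli`), while lifting the exponent gives `v₃(2^k - 1) = 1 + v₃(k)`. Hence
`v₃(x) ≥ v₃((k-1)!)` (`three_pow_dvd`), so `x` is at least the power of `3` in `(k-1)!`, which is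
about `3^(k/2)`.

Since `√3 > π/2`, the two bounds contradict each other as soon as `k ≥ 28` (`exists_three_pow`).
For `8 ≤ k ≤ 26` with `k ≠ 12`, the number `2^k - 1` has a prime factor `p > k + 1`; it divides
neither `k!` nor, by von Staudt–Clausen again, the denominator of `B_k`
(`not_dvd_den_bernoulli`), so `x` cannot be an integer. For `k = 12` the prime `691` in the
numerator of `B₁₂` plays this role.
-/

open Finset in
/-- A sum of reciprocals of primes different from `p` is `p`-integral: some integer prime to `p`
clears its denominators. -/
lemma exists_coprime_mul_sum (p : ℕ) (hp : p.Prime) (T : Finset ℕ)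
    (hT : ∀ q ∈ T, q.Prime ∧ q ≠ p) :
    ∃ c z : ℤ, ¬ (p : ℤ) ∣ c ∧ (c : ℚ) * ∑ q ∈ T, (1 : ℚ) / q = z := by
  induction T using Finset.induction_on with
  | empty => exact ⟨1, 0, by exact_mod_cast hp.one_lt.ne' ∘ Nat.dvd_one.mp, by simp⟩
  | insert q T hq ih =>
    obtain ⟨c, z, hc, hz⟩ := ih fun r hr => hT r (mem_insert_of_mem hr)
    obtain ⟨hqp, hne⟩ := hT q (mem_insert_self q T)
    have hq0 : (q : ℚ) ≠ 0 := by exact_mod_cast hqp.ne_zero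
    refine ⟨c * q, c + q * z, ?_, ?_⟩
    · intro h
      rcases (Nat.prime_iff_prime_int.mp hp).dvd_or_dvd h with h | h
      · exact hc h
      · exact hne ((Nat.prime_dvd_prime_iff_eq hp hqp).mp (by exact_mod_cast h)).symm
    · rw [sum_insert hq]
      push_cast
      rw [← hz]
      field_simp

/-- For a prime `p > k + 1`, the Bernoulli number `B_k` is `p`-integral. -/
lemma not_dvd_den_bernoulli (k p : ℕ) (heven : Even k) (hp : p.Prime) (hkp : k + 1 < p) :
    ¬ p ∣ (bernoulli k).den := by
  obtain ⟨j, rfl⟩ := heven.two_dvd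
  obtain ⟨w, hw⟩ := Bernoulli.vonStaudt_clausen j
  obtain ⟨c, z, hc, hz⟩ := exists_coprime_mul_sum p hp
    (Finset.filter (fun p => p.Prime ∧ (p - 1) ∣ 2 * j) (Finset.range (2 * j + 2))) (by
      intro q hq
      simp only [Finset.mem_filter, Finset.mem_range] at hq
      exact ⟨hq.2.1, by omega⟩)
  set B := bernoulli (2 * j)
  have h1 : (c : ℚ) * B = (c * w - z : ℤ) := by
    push_cast
    rw [← hz, hw]
    ring
  have hD : (B.den : ℚ) ≠ 0 := by exact_mod_cast B.den_nz
  have h2 : c * B.num = (c * w - z) * B.den := by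
    rw [← Rat.num_div_den B] at h1
    field_simp at h1
    rw [mul_comm (B.den : ℚ)] at h1
    exact_mod_cast h1
  intro h
  have h3 : (p : ℤ) ∣ c * B.num := h2 ▸ Dvd.dvd.mul_left (by exact_mod_cast h) _
  rcases (Nat.prime_iff_prime_int.mp hp).dvd_or_dvd h3 with h3 | h3
  · exact hc h3
  · exact Nat.not_coprime_of_dvd_of_dvd hp.one_lt (Int.natCast_dvd.mp h3) h B.reduced

/-- The prime `3` satisfies `3 - 1 ∣ k` for every even `k`, so it divides the denominator of
`B_k`. -/
lemma three_dvd_den_bernoulli (k : ℕ) (heven : Even k) (hk : 2 ≤ k) :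
    3 ∣ (bernoulli k).den := by
  obtain ⟨j, rfl⟩ := heven.two_dvd
  obtain ⟨w, hw⟩ := Bernoulli.vonStaudt_clausen j
  set S := Finset.filter (fun p => p.Prime ∧ (p - 1) ∣ 2 * j) (Finset.range (2 * j + 2)) with hS
  have h3S : 3 ∈ S := by
    simp only [hS, Finset.mem_filter, Finset.mem_range]
    exact ⟨by omega, Nat.prime_three, by simp⟩
  obtain ⟨c, z, hc, hz⟩ := exists_coprime_mul_sum 3 Nat.prime_three (S.erase 3) (by
      intro q hq
      simp only [hS, Finset.mem_erase, Finset.mem_filter] at hq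
      exact ⟨hq.2.2.1, hq.1⟩)
  rw [← Finset.add_sum_erase S _ h3S] at hw
  set B := bernoulli (2 * j)
  have h1 : 3 * (c : ℚ) * B = (3 * (c * w - z) - c : ℤ) := by
    push_cast
    rw [← hz, hw]
    push_cast
    ring
  have hD : (B.den : ℚ) ≠ 0 := by exact_mod_cast B.den_nz
  have h2 : 3 * c * B.num = (3 * (c * w - z) - c) * B.den := by
    rw [← Rat.num_div_den B] at h1
    field_simp at h1
    rw [mul_comm (B.den : ℚ)] at h1
    exact_mod_cast h1
  have h3 : (3 : ℤ) ∣ c * B.den := by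
    refine ⟨(c * w - z) * B.den - c * B.num, ?_⟩
    linear_combination h2
  rcases Int.prime_three.dvd_or_dvd h3 with h3 | h3
  · exact absurd h3 hc
  · exact_mod_cast h3

/-- Since `ζ(k) ≥ 1`, Euler's formula bounds `|B_k|` from below. -/
lemma factorial_le_bernoulli (k : ℕ) (heven : Even k) (hk : 2 ≤ k) :
    (k.factorial : ℝ) ≤ 2 ^ (k - 1) * Real.pi ^ k * |(bernoulli k : ℝ)| := by
  obtain ⟨j, rfl⟩ := heven.two_dvd
  have h := hasSum_zeta_nat (k := j) (by omega)
  have h1 := le_hasSum h 1 (fun n _ => by positivity)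
  have hf : (0 : ℝ) < (2 * j).factorial := by positivity
  rw [Nat.cast_one, one_pow, div_one, le_div_iff₀ hf, one_mul] at h1
  refine h1.trans ((le_abs_self _).trans (le_of_eq ?_))
  rw [abs_mul, abs_mul, abs_mul, abs_pow, abs_neg, abs_one, one_pow, one_mul,
    abs_of_pos (by positivity : (0 : ℝ) < 2 ^ (2 * j - 1)),
    abs_of_pos (by positivity : (0 : ℝ) < Real.pi ^ (2 * j))]

/-- For even `k ≥ 28` the power of `3` in `(k - 1)!`, roughly `3 ^ (k / 2)`, exceeds
`π ^ k / (2 ^ k - 1)`, roughly `(π / 2) ^ k`, because `√3 > π / 2`. -/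
lemma exists_three_pow (j : ℕ) : ∀ k, 28 ≤ k → Even k → k < 28 + 18 * (j + 1) →
    ∃ a, 3 ^ a ∣ (k - 1).factorial ∧ (22 / 7 : ℝ) ^ k < 3 ^ a * (2 ^ k - 1) := by
  induction j with
  | zero =>
    intro k hk he hlt
    have : k = 28 ∨ k = 30 ∨ k = 32 ∨ k = 34 ∨ k = 36 ∨ k = 38 ∨ k = 40 ∨ k = 42 ∨ k = 44 := by
      obtain ⟨r, rfl⟩ := he
      omega
    rcases this with rfl | rfl | rfl | rfl | rfl | rfl | rfl | rfl | rfl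
    · exact ⟨13, by decide +kernel, by norm_num⟩
    · exact ⟨13, by decide +kernel, by norm_num⟩
    · exact ⟨14, by decide +kernel, by norm_num⟩
    · exact ⟨15, by decide +kernel, by norm_num⟩
    · exact ⟨15, by decide +kernel, by norm_num⟩
    · exact ⟨17, by decide +kernel, by norm_num⟩
    · exact ⟨18, by decide +kernel, by norm_num⟩
    · exact ⟨18, by decide +kernel, by norm_num⟩
    · exact ⟨19, by decide +kernel, by norm_num⟩
  | succ j ih =>
    intro k hk he hlt
    rcases lt_or_ge k (28 + 18 * (j + 1)) with h | h
    · exact ih k hk he h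
    obtain ⟨l, rfl⟩ : ∃ l, k = l + 18 := ⟨k - 18, by omega⟩
    obtain ⟨a, ha, hb⟩ := ih l (by omega) (by
      rw [Nat.even_add] at he
      exact he.mpr (by decide)) (by omega)
    refine ⟨a + 8, ?_, ?_⟩
    · rw [show l + 18 - 1 = (l - 1) + 18 by omega, pow_add]
      exact (mul_dvd_mul ha (by decide +kernel : 3 ^ 8 ∣ Nat.factorial 18)).trans
        (Nat.factorial_mul_factorial_dvd_factorial_add _ _)
    · have h0 : (0 : ℝ) < (22 / 7) ^ l := by positivity
      have h18 : (22 / 7 : ℝ) ^ 18 ≤ 3 ^ 8 * 2 ^ 18 := by norm_num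
      have h3 : (0 : ℝ) < 3 ^ a := by positivity
      calc (22 / 7 : ℝ) ^ (l + 18) = (22 / 7) ^ l * (22 / 7) ^ 18 := pow_add _ _ _
        _ ≤ (22 / 7) ^ l * (3 ^ 8 * 2 ^ 18) := by gcongr
        _ < 3 ^ a * (2 ^ l - 1) * (3 ^ 8 * 2 ^ 18) := by gcongr
        _ ≤ 3 ^ (a + 8) * (2 ^ (l + 18) - 1) := by
          rw [pow_add, pow_add]
          nlinarith

/-- If `k!` is an integer multiple `m` of `2 ^ (k - 1) (2 ^ k - 1) |B_k|`, then `m` is divisible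
by the full power of `3` in `(k - 1)!`: the factor `3k` of `3 k!` absorbs that of `2 ^ k - 1`. -/
lemma three_pow_dvd (k m N D a : ℕ) (heven : Even k) (hk : 2 ≤ k) (hm : m ≠ 0)
    (hD : 3 ∣ D) (hD0 : D ≠ 0) (hND : N.Coprime D)
    (h : m * (2 ^ (k - 1) * (2 ^ k - 1) * N) = k.factorial * D)
    (ha : 3 ^ a ∣ (k - 1).factorial) : 3 ^ a ∣ m := by
  have : Fact (Nat.Prime 3) := ⟨Nat.prime_three⟩
  have hN : ¬ 3 ∣ N := fun h3 => Nat.not_coprime_of_dvd_of_dvd (by norm_num) h3 hD hND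
  have hN0 : N ≠ 0 := by
    rintro rfl
    exact hN (dvd_zero 3)
  have hk1 : 2 ^ k - 1 ≠ 0 := by
    have := Nat.one_lt_two_pow (n := k) (by omega)
    omega
  have hlte : padicValNat 3 (2 ^ k - 1) = 1 + padicValNat 3 k := by
    obtain ⟨j, rfl⟩ := heven.two_dvd
    have := padicValNat.pow_sub_pow (p := 3) (x := 4) (y := 1) (by norm_num) (by decide)
      (by decide) (by decide) (n := j) (by omega)
    rw [one_pow] at this
    rw [pow_mul, show 2 ^ 2 = 4 by norm_num, this, padicValNat.mul (by norm_num) (by omega),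
      padicValNat_primes (p := 3) (q := 2) (by decide)]
    simp
  have h2 : padicValNat 3 (2 ^ (k - 1)) = 0 :=
    padicValNat.eq_zero_of_not_dvd fun h3 => absurd (Nat.prime_three.dvd_of_dvd_pow h3) (by decide)
  have hk2 : k.factorial = k * (k - 1).factorial := (Nat.mul_factorial_pred (by omega)).symm
  have hf0 := Nat.factorial_ne_zero (k - 1)
  have hv := congrArg (padicValNat 3) h
  rw [hk2, padicValNat.mul hm (by positivity), padicValNat.mul (by positivity) hN0,
    padicValNat.mul (by positivity) hk1, padicValNat.mul (by positivity) hD0,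
    padicValNat.mul (by omega) hf0, padicValNat.eq_zero_of_not_dvd hN, h2, hlte] at hv
  have hD1 : 1 ≤ padicValNat 3 D := one_le_padicValNat_of_dvd hD0 hD
  rw [padicValNat_dvd_iff_le hf0] at ha
  rw [padicValNat_dvd_iff_le hm]
  omega

/-- For every even integer `k ≥ 8`, the rational number
`( k! / (2^{k−1}(2^k−1)|B_k|) )²` is not an integer. -/
theorem stmt_8 (k : ℕ) (heven : Even k) (hk : 8 ≤ k) :
    ¬ ∃ n : ℤ, ((k.factorial : ℚ) / (2 ^ (k - 1) * (2 ^ k - 1) * |bernoulli k|)) ^ 2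
      = (n : ℚ) := by
  rintro ⟨n, hn⟩
  have h3D := three_dvd_den_bernoulli k heven (by omega)
  have hB0 : bernoulli k ≠ 0 := by
    intro h
    rw [h] at h3D
    exact absurd h3D (by decide)
  have hpow : (1 : ℚ) < 2 ^ k := one_lt_pow₀ (by norm_num) (by omega)
  have hpow' : (0 : ℚ) < 2 ^ k - 1 := by linarith
  have habs : 0 < |bernoulli k| := abs_pos.mpr hB0
  -- A rational number whose square is an integer is itself an integer.
  obtain ⟨m, hm⟩ : ∃ m : ℕ,
      (k.factorial : ℚ) / (2 ^ (k - 1) * (2 ^ k - 1) * |bernoulli k|) = m := by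
    set x := (k.factorial : ℚ) / (2 ^ (k - 1) * (2 ^ k - 1) * |bernoulli k|) with hx
    have hx0 : 0 ≤ x := by positivity
    have hden : x.den = 1 := by
      have := congrArg Rat.den hn
      rw [Rat.den_pow, Rat.den_intCast] at this
      exact (Nat.pow_eq_one.mp this).resolve_right (by norm_num)
    refine ⟨x.num.toNat, ?_⟩
    have h1 : ((x.num.toNat : ℤ) : ℚ) = x.num := by
      rw [Int.toNat_of_nonneg (Rat.num_nonneg.mpr hx0)]
    rw [Int.cast_natCast] at h1
    rw [h1, Rat.coe_int_num_of_den_eq_one hden]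
  rw [div_eq_iff (by positivity)] at hm
  set B := bernoulli k with hB
  have hN : |B| * B.den = (B.num.natAbs : ℚ) := by
    have : (B.den : ℚ) = |(B.den : ℚ)| := (abs_of_nonneg (by positivity)).symm
    rw [this, ← abs_mul, Rat.mul_den_eq_num, Nat.cast_natAbs, Int.cast_abs]
  have hmul : m * (2 ^ (k - 1) * (2 ^ k - 1) * B.num.natAbs) = k.factorial * B.den := by
    have h2 : ((2 ^ k - 1 : ℕ) : ℚ) = 2 ^ k - 1 := by
      rw [Nat.cast_sub Nat.one_le_two_pow]
      simp
    have : ((m * (2 ^ (k - 1) * (2 ^ k - 1) * B.num.natAbs) : ℕ) : ℚ)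
        = ((k.factorial * B.den : ℕ) : ℚ) := by
      push_cast [h2]
      rw [hm, ← hN]
      ring
    exact_mod_cast this
  have hm0 : m ≠ 0 := by
    rintro rfl
    have : k.factorial * B.den ≠ 0 := mul_ne_zero (Nat.factorial_ne_zero k) B.den_nz
    exact this (by rw [← hmul, zero_mul])
  -- A prime `p > k + 1` dividing `2 ^ k - 1` would divide neither `k!` nor the denominator of `B_k`.
  have key : ∀ p : ℕ, p.Prime → k + 1 < p → ¬ p ∣ 2 ^ k - 1 := by
    intro p hp hkp hdvd
    have h1 : p ∣ k.factorial * B.den :=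
      hmul ▸ Dvd.dvd.mul_left (Dvd.dvd.mul_right (Dvd.dvd.mul_left hdvd _) _) _
    rcases hp.dvd_mul.mp h1 with h | h
    · have := hp.dvd_factorial.mp h
      omega
    · exact not_dvd_den_bernoulli k p heven hp hkp h
  rcases lt_or_ge k 28 with hlt | hge
  · have : k = 8 ∨ k = 10 ∨ k = 12 ∨ k = 14 ∨ k = 16 ∨ k = 18 ∨ k = 20 ∨ k = 22 ∨ k = 24 ∨
        k = 26 := by
      obtain ⟨r, rfl⟩ := heven
      omega
    rcases this with rfl | rfl | rfl | rfl | rfl | rfl | rfl | rfl | rfl | rfl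
    · exact key 17 (by norm_num) (by norm_num) (by norm_num)
    · exact key 31 (by norm_num) (by norm_num) (by norm_num)
    -- No prime factor of `2 ^ 12 - 1 = 3² · 5 · 7 · 13` exceeds `13`, but the prime `691`
    -- divides the numerator of `B₁₂`.
    · have h12 : bernoulli 12 = -691 / 2730 := by decide +kernel
      have hnum : B.num.natAbs = 691 := by rw [hB, h12]; decide +kernel
      have hden : B.den = 2730 := by rw [hB, h12]; decide +kernel
      rw [hnum, hden] at hmul
      norm_num [Nat.factorial] at hmul
      omega
    · exact key 43 (by norm_num) (by norm_num) (by norm_num)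
    · exact key 257 (by norm_num) (by norm_num) (by norm_num)
    · exact key 73 (by norm_num) (by norm_num) (by norm_num)
    · exact key 31 (by norm_num) (by norm_num) (by norm_num)
    · exact key 89 (by norm_num) (by norm_num) (by norm_num)
    · exact key 241 (by norm_num) (by norm_num) (by norm_num)
    · exact key 2731 (by norm_num) (by norm_num) (by norm_num)
  · obtain ⟨a, ha, hlt⟩ := exists_three_pow k k hge heven (by omega)
    have hdvd := three_pow_dvd k m _ _ a heven (by omega) hm0 h3D B.den_nz B.reduced hmul ha
    have hle : (3 : ℝ) ^ a ≤ m := by exact_mod_cast Nat.le_of_dvd (Nat.pos_of_ne_zero hm0) hdvd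
    have hf := factorial_le_bernoulli k heven (by omega)
    have hmR : (k.factorial : ℝ) = m * (2 ^ (k - 1) * (2 ^ k - 1) * |(B : ℝ)|) := by
      exact_mod_cast congrArg (fun q : ℚ => (q : ℝ)) hm
    have hpowR : (1 : ℝ) < 2 ^ k := one_lt_pow₀ (by norm_num) (by omega)
    have habsR : (0 : ℝ) < |(B : ℝ)| := abs_pos.mpr (by exact_mod_cast hB0)
    have hup : (m : ℝ) * (2 ^ k - 1) ≤ Real.pi ^ k := by
      refine le_of_mul_le_mul_left ?_ (by positivity : (0 : ℝ) < 2 ^ (k - 1) * |(B : ℝ)|)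
      linarith
    have hpi : Real.pi ^ k ≤ (22 / 7 : ℝ) ^ k := by
      have : Real.pi ≤ 22 / 7 := by linarith [Real.pi_lt_d4]
      gcongr
    have : (3 : ℝ) ^ a * (2 ^ k - 1) ≤ m * (2 ^ k - 1) :=
      mul_le_mul_of_nonneg_right hle (by linarith)
    linarith
end

section
/- For every even positive integer n, the denominator of the Bernoulli number B_n, written in lowest terms, equals the product of all primes p such that p − 1 divides n. -/
/-!
By von Staudt–Clausen (`Bernoulli.vonStaudt_clausen`), `B_n` and `-∑ 1 / p` differ by an integer,
where `p` runs over the primes with `p - 1 ∣ n`; hence `B_n` has the same denominator as `∑ 1 / p`.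
Denominators multiply when two rationals with coprime denominators are added, so a sum of
reciprocals of distinct primes has the product of these primes as its denominator.
-/

/-- If two rationals have coprime denominators, no cancellation occurs in their sum: each
denominator divides the product of the other one with the denominator of the sum. -/
theorem den_add_of_coprime (a b : ℚ) (h : a.den.Coprime b.den) :
    (a + b).den = a.den * b.den := by
  apply Nat.dvd_antisymm (Rat.add_den_dvd a b)
  apply h.mul_dvd_of_dvd_of_dvd
  · have := Rat.sub_den_dvd (a + b) b
    rw [add_sub_cancel_right] at this
    exact h.dvd_of_dvd_mul_right this
  · have := Rat.sub_den_dvd (a + b) a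
    rw [add_sub_cancel_left] at this
    exact h.symm.dvd_of_dvd_mul_right this

theorem den_sum_one_div_primes (s : Finset ℕ) (hs : ∀ p ∈ s, p.Prime) :
    (∑ p ∈ s, (1 : ℚ) / p).den = ∏ p ∈ s, p := by
  induction s using Finset.induction_on with
  | empty => simp
  | insert q s hq ih =>
    have hqp : q.Prime := hs q (Finset.mem_insert_self q s)
    have ih := ih fun p hp => hs p (Finset.mem_insert_of_mem hp)
    have hden : ((1 : ℚ) / q).den = q := by simp [hqp.ne_zero]
    rw [Finset.sum_insert hq, Finset.prod_insert hq, den_add_of_coprime, hden, ih]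
    rw [hden, ih]
    refine Nat.Coprime.prod_right fun p hp => ?_
    refine (Nat.coprime_primes hqp (hs p (Finset.mem_insert_of_mem hp))).mpr ?_
    rintro rfl
    exact hq hp

/-- For every even positive integer `n`, the denominator of the Bernoulli number `B_n`
(in lowest terms) equals the product of all primes `p` with `p − 1 ∣ n`.
(Every such prime satisfies `p ≤ n + 1`, so the product over `Finset.range (n + 2)`
ranges over all of them.) -/
theorem stmt_11 (n : ℕ) (heven : Even n) (hpos : 0 < n) :
    (bernoulli n).den
      = ∏ p ∈ (Finset.range (n + 2)).filter (fun p => p.Prime ∧ (p - 1) ∣ n), p := by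
  obtain ⟨k, rfl⟩ := heven.two_dvd
  obtain ⟨m, hm⟩ := Bernoulli.vonStaudt_clausen k
  rw [← den_sum_one_div_primes _ fun p hp => (Finset.mem_filter.mp hp).2.1,
    eq_sub_of_add_eq hm.symm, Rat.intCast_sub_den]
end
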